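/- arXiv:2411.11261 — 2 statements merged into one kernel-verified Lean document; each statement's English description precedes it below -/
import Mathlib

section
/- Let 𝔳 ⊆ 𝔭 be a 3-dimensional subspace such that R(X,Y)Z ∈ 𝔳 and (∇_V R)(X,Y,Z) ∈ 𝔳 for all X, Y, Z, V ∈ 𝔳. Then there exists k ∈ K = {diag(λ, q) : λ ∈ ℂ ⊆ ℍ, |λ| = 1, q ∈ ℍ, |q| = 1} such that k 𝔳 k⁻¹ = span{e₁, e₃, e₅}. (Algebraic core of: every complete 3-dimensional totally geodesic submanifold of nearly Kähler ℂP³ is congruent to the Lagrangian Berger projective space ℝP³.) -/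
/- Setup: the homogeneous nearly Kähler `ℂP³ = Sp(2)/(U(1)×Sp(1))`.
`𝔤 = 𝔰𝔭(2) ⊆ Mat₂(ℍ)`, `𝔨 ≅ 𝔲(1) ⊕ 𝔰𝔭(1)` the diagonal subalgebra
`{diag(a i, q)}`, and `𝔭` its orthogonal complement, with orthonormal basis
`e₁,…,e₆` as in the paper; the isotropy group is
`K = {diag(λ, q) : λ ∈ ℂ ⊆ ℍ, |λ| = 1, q ∈ ℍ, |q| = 1}`. -/

noncomputable section
open Matrix

abbrev Mq := Matrix (Fin 2) (Fin 2) (Quaternion ℝ)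

def qi : Quaternion ℝ := ⟨0, 1, 0, 0⟩
def qj : Quaternion ℝ := ⟨0, 0, 1, 0⟩
def qk : Quaternion ℝ := ⟨0, 0, 0, 1⟩

def e1 : Mq := (Real.sqrt 2)⁻¹ • !![qj, 0; 0, 0]
def e2 : Mq := (Real.sqrt 2)⁻¹ • !![qk, 0; 0, 0]
def e3 : Mq := (2 : ℝ)⁻¹ • !![0, -1; 1, 0]
def e4 : Mq := (2 : ℝ)⁻¹ • !![0, qi; qi, 0]
def e5 : Mq := (2 : ℝ)⁻¹ • !![0, qj; qj, 0]
def e6 : Mq := (2 : ℝ)⁻¹ • !![0, qk; qk, 0]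

/-- `𝔨 = {diag(a i, q) : a ∈ ℝ, q ∈ Im ℍ}`. -/
def kAlg : Submodule ℝ Mq :=
  Submodule.span ℝ {!![qi, 0; 0, 0], !![0, 0; 0, qi], !![0, 0; 0, qj], !![0, 0; 0, qk]}

/-- `𝔭`, the orthogonal complement of `𝔨` in `𝔰𝔭(2)`. -/
def pAlg : Submodule ℝ Mq := Submodule.span ℝ {e1, e2, e3, e4, e5, e6}

/-- `𝔤 = 𝔰𝔭(2) = 𝔨 ⊕ 𝔭`. -/
def gAlg : Submodule ℝ Mq := kAlg ⊔ pAlg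

/-- difference tensor `D_X Y = (1/2)[X,Y]_𝔭`. -/
def Dmap (πp : Mq → Mq) (X Y : Mq) : Mq := (2 : ℝ)⁻¹ • πp ⁅X, Y⁆

/-- curvature tensor
`R(X,Y)Z = D_X D_Y Z − D_Y D_X Z − [[X,Y]_𝔨, Z] − D_{[X,Y]_𝔭} Z`. -/
def Rmap (πk πp : Mq → Mq) (X Y Z : Mq) : Mq :=
  Dmap πp X (Dmap πp Y Z) - Dmap πp Y (Dmap πp X Z) - ⁅πk ⁅X, Y⁆, Z⁆
    - Dmap πp (πp ⁅X, Y⁆) Z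

/-- covariant derivative of the curvature,
`(∇_V R)(X,Y,Z) = D_V(R(X,Y)Z) − R(D_V X,Y)Z − R(X,D_V Y)Z − R(X,Y)(D_V Z)`. -/
def nablaR (πk πp : Mq → Mq) (V X Y Z : Mq) : Mq :=
  Dmap πp V (Rmap πk πp X Y Z) - Rmap πk πp (Dmap πp V X) Y Z
    - Rmap πk πp X (Dmap πp V Y) Z - Rmap πk πp X Y (Dmap πp V Z)

/-- conjugation `X ↦ k X k⁻¹` by the isotropy element `k = diag(λ, q)`
(with inverse `k⁻¹ = diag(λ⁻¹, q⁻¹)`), as an `ℝ`-linear map. -/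
def conjBy (lam q : Quaternion ℝ) : Mq →ₗ[ℝ] Mq :=
  (LinearMap.mulLeft ℝ (!![lam, 0; 0, q] : Mq)).comp
    (LinearMap.mulRight ℝ (!![lam⁻¹, 0; 0, q⁻¹] : Mq))

/-!
Elements of `𝔭` are the matrices `pm y z w = !![y j + z k, -star w; w, 0]`: a vertical part in
`ℝj ⊕ ℝk` and a horizontal part `w ∈ ℍ`. A 3-dimensional subspace `v` of the 6-dimensional `𝔭` meets
the 4-dimensional horizontal space, so it contains some `X = pm 0 0 w` with `|w| = 1`
(`exists_horizontal`). Two operators attached to `X` preserve `v`. Writing horizontal vectors as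
`w u`, the computation of brackets gives:

* the Jacobi operator `Y ↦ R(Y, X)X` (`jacobi_eq`) has eigenvalue `1/2` on the vertical plane, `0` on
  `w`, `4` on `w i` and `5/2` on `span {w j, w k}`;
* the Cartan operator `Y ↦ (∇_X R)(Y, X, X)` (`cartan_eq`) kills `w` and `w i`, and sends
  `(f, w g)` to `(-2 g, -w f)` for `f, g ∈ ℝj ⊕ ℝk`.

As `dim v > 2`, some `Y ∈ v` lies outside `span {w, w i}`. Applying the Cartan operator twice removes
the components of `Y` along `w` and `w i`; the Jacobi operator, whose eigenvalues `1/2` and `5/2` are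
distinct, then separates the vertical part of the result from the part in `span {w j, w k}`. One of
the two is nonzero, and a last application of the Cartan operator gives a nonzero `f ∈ ℝj ⊕ ℝk` with
both `(f, 0)` and `(0, w f)` in `v` (`exists_pair`).

Finally take `λ ∈ U(1)` such that `λ f λ⁻¹ = λ² f` is a real multiple of `j` (`exists_rotation`), and
`q = λ w⁻¹`. Conjugation by `diag(λ, q)` sends `(f, 0)`, `(0, w)`, `(0, w f)` to nonzero multiples of
`e1`, `e3`, `e5` (`conjBy_pm`), and equality of the two spaces follows by dimension.

The maps `πk`, `πp` are not assumed linear: they are determined on `𝔤` because `𝔨 ∩ 𝔭 = 0`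
(`proj_eq`), and all brackets that occur lie in `𝔤`.
-/

/-! ### Coordinates on `𝔨` and `𝔭` -/

/-- The quaternion `a + b i + c j + d k`. -/
def quat (a b c d : ℝ) : Quaternion ℝ := ⟨a, b, c, d⟩

@[simp] lemma quat_re (a b c d : ℝ) : (quat a b c d).re = a := rfl
@[simp] lemma quat_imI (a b c d : ℝ) : (quat a b c d).imI = b := rfl
@[simp] lemma quat_imJ (a b c d : ℝ) : (quat a b c d).imJ = c := rfl
@[simp] lemma quat_imK (a b c d : ℝ) : (quat a b c d).imK = d := rfl
@[simp] lemma zero_re : (0 : Quaternion ℝ).re = 0 := rfl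
@[simp] lemma zero_imI : (0 : Quaternion ℝ).imI = 0 := rfl
@[simp] lemma zero_imJ : (0 : Quaternion ℝ).imJ = 0 := rfl
@[simp] lemma zero_imK : (0 : Quaternion ℝ).imK = 0 := rfl
@[simp] lemma one_re : (1 : Quaternion ℝ).re = 1 := rfl
@[simp] lemma one_imI : (1 : Quaternion ℝ).imI = 0 := rfl
@[simp] lemma one_imJ : (1 : Quaternion ℝ).imJ = 0 := rfl
@[simp] lemma one_imK : (1 : Quaternion ℝ).imK = 0 := rfl
lemma qi_eq : qi = quat 0 1 0 0 := rfl
lemma qj_eq : qj = quat 0 0 1 0 := rfl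
lemma qk_eq : qk = quat 0 0 0 1 := rfl

lemma mq_ext {X Y : Mq} (h00 : X 0 0 = Y 0 0) (h01 : X 0 1 = Y 0 1) (h10 : X 1 0 = Y 1 0)
    (h11 : X 1 1 = Y 1 1) : X = Y := by
  ext1 a b
  fin_cases a <;> fin_cases b <;> assumption

/-- The quaternion `y j + z k`. -/
def jk (y z : ℝ) : Quaternion ℝ := quat 0 0 y z

@[simp] lemma jk_re (y z : ℝ) : (jk y z).re = 0 := rfl
@[simp] lemma jk_imI (y z : ℝ) : (jk y z).imI = 0 := rfl
@[simp] lemma jk_imJ (y z : ℝ) : (jk y z).imJ = y := rfl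
@[simp] lemma jk_imK (y z : ℝ) : (jk y z).imK = z := rfl
@[simp] lemma jk_zero : jk 0 0 = 0 := rfl

/-- The element of `𝔭` with vertical part `y j + z k` and horizontal part `w ∈ ℍ`. -/
def pm (y z : ℝ) (w : Quaternion ℝ) : Mq := !![jk y z, -star w; w, 0]

/-- The element `diag(a i, p)` with `p` the imaginary part of `q`. -/
def km (a : ℝ) (q : Quaternion ℝ) : Mq := !![quat 0 a 0 0, 0; 0, q.im]

lemma pm_add (y z y' z' : ℝ) (w w' : Quaternion ℝ) :
    pm y z w + pm y' z' w' = pm (y + y') (z + z') (w + w') := by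
  apply mq_ext <;> ext <;> simp [pm] <;> ring

lemma pm_smul (c y z : ℝ) (w : Quaternion ℝ) :
    c • pm y z w = pm (c * y) (c * z) (c • w) := by
  apply mq_ext <;> ext <;> simp [pm]

lemma pm_neg (y z : ℝ) (w : Quaternion ℝ) : -pm y z w = pm (-y) (-z) (-w) := by
  apply mq_ext <;> ext <;> simp [pm]

lemma pm_sub (y z y' z' : ℝ) (w w' : Quaternion ℝ) :
    pm y z w - pm y' z' w' = pm (y - y') (z - z') (w - w') := by
  rw [sub_eq_add_neg, pm_neg, pm_add]; simp only [sub_eq_add_neg]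

lemma pm_zero : pm 0 0 0 = 0 := by
  apply mq_ext <;> ext <;> simp [pm]

lemma pm_decomp (y z : ℝ) (w : Quaternion ℝ) :
    pm y z w = (√2 * y) • e1 + (√2 * z) • e2 + (2 * w.re) • e3 + (2 * w.imI) • e4
      + (2 * w.imJ) • e5 + (2 * w.imK) • e6 := by
  have h : (√2 : ℝ) ≠ 0 := by positivity
  apply mq_ext <;> ext <;>
    simp [pm, e1, e2, e3, e4, e5, e6, qi_eq, qj_eq, qk_eq] <;> field_simp

lemma pm_mem (y z : ℝ) (w : Quaternion ℝ) : pm y z w ∈ pAlg := by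
  rw [pm_decomp]
  have h : ∀ x ∈ ({e1, e2, e3, e4, e5, e6} : Set Mq), x ∈ pAlg :=
    fun x hx => Submodule.subset_span hx
  refine add_mem (add_mem (add_mem (add_mem (add_mem ?_ ?_) ?_) ?_) ?_) ?_ <;>
    exact Submodule.smul_mem _ _ (h _ (by simp))

lemma exists_pm {X : Mq} (hX : X ∈ pAlg) : ∃ y z w, X = pm y z w := by
  induction hX using Submodule.span_induction with
  | mem x hx =>
    have h0 : (√2 : ℝ) ≠ 0 := by positivity
    simp only [Set.mem_insert_iff, Set.mem_singleton_iff] at hx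
    rcases hx with rfl | rfl | rfl | rfl | rfl | rfl
    · exact ⟨(√2)⁻¹, 0, quat 0 0 0 0, by rw [pm_decomp]; simp [h0]⟩
    · exact ⟨0, (√2)⁻¹, quat 0 0 0 0, by rw [pm_decomp]; simp [h0]⟩
    · exact ⟨0, 0, quat (1/2) (0) (0) (0), by rw [pm_decomp]; simp⟩
    · exact ⟨0, 0, quat (0) (1/2) (0) (0), by rw [pm_decomp]; simp⟩
    · exact ⟨0, 0, quat (0) (0) (1/2) (0), by rw [pm_decomp]; simp⟩
    · exact ⟨0, 0, quat (0) (0) (0) (1/2), by rw [pm_decomp]; simp⟩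
  | zero => exact ⟨0, 0, 0, pm_zero.symm⟩
  | add x y _ _ hx hy =>
    obtain ⟨a, b, c, rfl⟩ := hx
    obtain ⟨a', b', c', rfl⟩ := hy
    exact ⟨_, _, _, pm_add ..⟩
  | smul r x _ hx =>
    obtain ⟨a, b, c, rfl⟩ := hx
    exact ⟨_, _, _, pm_smul ..⟩

lemma km_decomp (a : ℝ) (q : Quaternion ℝ) :
    km a q = a • !![qi, 0; 0, 0] + q.imI • !![0, 0; 0, qi] + q.imJ • !![0, 0; 0, qj]
      + q.imK • !![0, 0; 0, qk] := by
  apply mq_ext <;> ext <;> simp [km, qi_eq, qj_eq, qk_eq]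

lemma km_mem (a : ℝ) (q : Quaternion ℝ) : km a q ∈ kAlg := by
  rw [km_decomp]
  refine add_mem (add_mem (add_mem ?_ ?_) ?_) ?_ <;>
    exact Submodule.smul_mem _ _ (Submodule.subset_span (by simp))

/-- Elements of `𝔨` are diagonal with `(0,0)` entry in `ℝ i`. -/
lemma kAlg_entries {X : Mq} (hX : X ∈ kAlg) :
    (X 0 0).imJ = 0 ∧ (X 0 0).imK = 0 ∧ X 1 0 = 0 := by
  induction hX using Submodule.span_induction with
  | mem x hx =>
    simp only [Set.mem_insert_iff, Set.mem_singleton_iff] at hx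
    rcases hx with rfl | rfl | rfl | rfl <;> simp [qi_eq, qj_eq, qk_eq]
  | zero => simp
  | add x y _ _ hx hy => simp [hx, hy]
  | smul r x _ hx => simp [hx, Matrix.smul_apply]

/-- The sum `𝔨 + 𝔭` is direct, so `πk` and `πp` are the two projections on `𝔤`. -/
lemma proj_eq {πk πp : Mq → Mq}
    (hdec : ∀ Z ∈ gAlg, πk Z ∈ kAlg ∧ πp Z ∈ pAlg ∧ πk Z + πp Z = Z)
    (a : ℝ) (q : Quaternion ℝ) (y z : ℝ) (w : Quaternion ℝ) :
    πk (km a q + pm y z w) = km a q ∧ πp (km a q + pm y z w) = pm y z w := by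
  obtain ⟨h1, h2, h3⟩ := hdec (km a q + pm y z w)
    (add_mem (Submodule.mem_sup_left (km_mem a q)) (Submodule.mem_sup_right (pm_mem y z w)))
  obtain ⟨k1, k2, k3⟩ := kAlg_entries (sub_mem h1 (km_mem a q))
  obtain ⟨y', z', w', h⟩ := exists_pm h2
  have e : πk (km a q + pm y z w) - km a q = pm (y - y') (z - z') (w - w') := by
    rw [← pm_sub, ← h, sub_eq_sub_iff_add_eq_add, h3, add_comm]
  rw [e] at k1 k2 k3
  have hy : y = y' := by simpa [pm, sub_eq_zero] using k1
  have hz : z = z' := by simpa [pm, sub_eq_zero] using k2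
  have hw : w = w' := by simpa [pm, sub_eq_zero] using k3
  subst hy hz hw
  refine ⟨?_, h⟩
  rw [h] at h3
  exact add_right_cancel h3

/-! ### Brackets, Jacobi operator and Cartan operator of a horizontal vector -/

/-- Bracket with a horizontal vector `w` of unit length; horizontal vectors are written `w u`. -/
lemma bracket_eq {w : Quaternion ℝ} (hw : star w * w = 1) (y z : ℝ) (u : Quaternion ℝ) :
    ⁅pm 0 0 w, pm y z (w * u)⁆ =
      km (-2 * u.imI) ((2 : ℝ) • (w * u * star w))
        + pm (-2 * u.imJ) (-2 * u.imK) (w * jk y z) := by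
  have h1 : star w * (w * u) = u := by rw [← mul_assoc, hw, one_mul]
  have h2 : (star u * star w) * w = star u := by rw [mul_assoc, hw, mul_one]
  have h3 : star (jk y z) = - jk y z := by ext <;> simp
  have h4 : w * u * star w - w * (star u * star w) = (2 : ℝ) • (w * u * star w).im := by
    rw [show star u * star w = star (w * u) by rw [star_mul], two_smul]
    rw [show w * star (w * u) = star (w * u * star w) by simp [mul_assoc]]
    ext <;> simp <;> ring
  rw [Ring.lie_def]
  apply mq_ext
  · simp [pm, km, h1, h2]
    ext <;> simp <;> ring
  · simp [pm, km, h1, h2, h3]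
  · simp [pm, km, h1, h2]
  · simp [pm, km, h1, h2]
    rw [← h4]
    abel

/-- The isotropy action on the horizontal vector `w` of an element of `𝔨` of the shape produced by
`bracket_swap`. -/
lemma km_bracket {w : Quaternion ℝ} (hw : star w * w = 1) (a : ℝ) (u : Quaternion ℝ) :
    ⁅km a ((2 : ℝ) • (w * u * star w)), pm 0 0 w⁆ =
      pm 0 0 (w * quat 0 (2 * u.imI - a) (2 * u.imJ) (2 * u.imK)) := by
  have h1 : (w * u * star w).im * w = w * u.im := by
    have e : ∀ t : Quaternion ℝ, (2 : ℝ) • t.im = t - star t := fun t => by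
      ext <;> simp <;> ring
    have h : (2 : ℝ) • ((w * u * star w).im * w) = (2 : ℝ) • (w * u.im) := by
      rw [← smul_mul_assoc, ← mul_smul_comm, e, e]
      simp [sub_mul, mul_sub, mul_assoc, hw]
    simpa using h
  have h2 : star w * (w * u * star w).im = u.im * star w := by
    have := congrArg star h1
    simpa using this
  have h3 : (2 : ℝ) • u.im - quat 0 a 0 0 = quat 0 (2 * u.imI - a) (2 * u.imJ) (2 * u.imK) := by
    ext <;> simp
  have h4 : star (quat 0 (2 * u.imI - a) (2 * u.imJ) (2 * u.imK)) =
      quat 0 a 0 0 - (2 : ℝ) • u.im := by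
    rw [← h3]; ext <;> simp [neg_add_eq_sub]
  rw [Ring.lie_def]
  apply mq_ext
  · simp [pm, km]
  · simp [pm, km, h2, h4, sub_mul, neg_add_eq_sub]
  · simp [pm, km, h1, ← h3, mul_sub]
  · simp [pm, km]

lemma proj_zero {πk πp : Mq → Mq}
    (hdec : ∀ Z ∈ gAlg, πk Z ∈ kAlg ∧ πp Z ∈ pAlg ∧ πk Z + πp Z = Z) :
    πk 0 = 0 ∧ πp 0 = 0 := by
  have hk : km 0 0 = 0 := by apply mq_ext <;> ext <;> simp [km]
  simpa [hk, pm_zero] using proj_eq hdec 0 0 0 0 0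

lemma km_neg (a : ℝ) (q : Quaternion ℝ) : -km a q = km (-a) (-q) := by
  apply mq_ext <;> ext <;> simp [km]

lemma mq_lie_zero (X : Mq) : ⁅X, (0 : Mq)⁆ = 0 := by simp [Ring.lie_def]
lemma mq_zero_lie (X : Mq) : ⁅(0 : Mq), X⁆ = 0 := by simp [Ring.lie_def]
lemma mq_lie_self (X : Mq) : ⁅X, X⁆ = 0 := by simp [Ring.lie_def]
lemma mq_lie_skew (X Y : Mq) : -⁅Y, X⁆ = ⁅X, Y⁆ := by simp [Ring.lie_def]

lemma bracket_swap {w : Quaternion ℝ} (hw : star w * w = 1) (y z : ℝ) (u : Quaternion ℝ) :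
    ⁅pm y z (w * u), pm 0 0 w⁆ =
      km (2 * u.imI) ((2 : ℝ) • (w * (-u) * star w))
        + pm (2 * u.imJ) (2 * u.imK) (w * jk (-y) (-z)) := by
  rw [← mq_lie_skew (pm y z (w * u)) (pm 0 0 w), bracket_eq hw, neg_add, km_neg, pm_neg]
  have : -(w * jk y z) = w * jk (-y) (-z) := by
    rw [← mul_neg]; congr 1; ext <;> simp
  rw [this]
  simp

lemma half_mul_jk (w : Quaternion ℝ) (y z : ℝ) :
    (2 : ℝ)⁻¹ • (w * jk y z) = w * jk (y / 2) (z / 2) := by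
  rw [← mul_smul_comm]; congr 1; ext <;> simp <;> ring

lemma D_left {πk πp : Mq → Mq}
    (hdec : ∀ Z ∈ gAlg, πk Z ∈ kAlg ∧ πp Z ∈ pAlg ∧ πk Z + πp Z = Z)
    {w : Quaternion ℝ} (hw : star w * w = 1) (y z : ℝ) (u : Quaternion ℝ) :
    Dmap πp (pm 0 0 w) (pm y z (w * u)) =
    pm (-u.imJ) (-u.imK) (w * jk (y / 2) (z / 2)) := by
  rw [Dmap, bracket_eq hw, (proj_eq hdec _ _ _ _ _).2, pm_smul, half_mul_jk]
  congr 1 <;> ring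

lemma D_right {πk πp : Mq → Mq}
    (hdec : ∀ Z ∈ gAlg, πk Z ∈ kAlg ∧ πp Z ∈ pAlg ∧ πk Z + πp Z = Z)
    {w : Quaternion ℝ} (hw : star w * w = 1) (y z : ℝ) (u : Quaternion ℝ) :
    Dmap πp (pm y z (w * u)) (pm 0 0 w) =
    pm u.imJ u.imK (w * jk (-y / 2) (-z / 2)) := by
  rw [Dmap, bracket_swap hw, (proj_eq hdec _ _ _ _ _).2, pm_smul, half_mul_jk]
  congr 1 <;> ring

lemma D_self {πk πp : Mq → Mq}
    (hdec : ∀ Z ∈ gAlg, πk Z ∈ kAlg ∧ πp Z ∈ pAlg ∧ πk Z + πp Z = Z) (w : Quaternion ℝ) :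
    Dmap πp (pm 0 0 w) (pm 0 0 w) = 0 := by
  simp [Dmap, mq_lie_self, (proj_zero hdec).2]

/-- The Jacobi operator of the unit horizontal vector `w`: it has eigenvalue `1/2` on the vertical
plane, `4` on `w i` and `5/2` on `w j, w k`. -/
lemma jacobi_eq {πk πp : Mq → Mq}
    (hdec : ∀ Z ∈ gAlg, πk Z ∈ kAlg ∧ πp Z ∈ pAlg ∧ πk Z + πp Z = Z)
    {w : Quaternion ℝ} (hw : star w * w = 1) (y z : ℝ) (u : Quaternion ℝ) :
    Rmap πk πp (pm y z (w * u)) (pm 0 0 w) (pm 0 0 w) =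
    pm (y / 2) (z / 2)
      (w * quat 0 (4 * u.imI) (5 / 2 * u.imJ) (5 / 2 * u.imK)) := by
  rw [Rmap, D_self hdec, D_right hdec hw, D_left hdec hw, bracket_swap hw,
    (proj_eq hdec _ _ _ _ _).2, (proj_eq hdec _ _ _ _ _).1, D_right hdec hw, km_bracket hw,
    show Dmap πp (pm y z (w * u)) 0 = pm 0 0 0 by
      simp [Dmap, mq_lie_zero, (proj_zero hdec).2, pm_zero],
    pm_sub, pm_sub, pm_sub]
  congr 1
  · simp; ring
  · simp; ring
  · rw [zero_sub, ← mul_neg, ← mul_sub, ← mul_sub]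
    congr 1
    ext <;> simp <;> ring

/-- The Cartan operator `Y ↦ (∇_X R)(Y, X, X)` of the unit horizontal vector `w` swaps the vertical
plane with the span of `w j, w k`, and kills `w` and `w i`. -/
lemma cartan_eq {πk πp : Mq → Mq}
    (hdec : ∀ Z ∈ gAlg, πk Z ∈ kAlg ∧ πp Z ∈ pAlg ∧ πk Z + πp Z = Z)
    {w : Quaternion ℝ} (hw : star w * w = 1) (y z : ℝ) (u : Quaternion ℝ) :
    nablaR πk πp (pm 0 0 w) (pm y z (w * u)) (pm 0 0 w) (pm 0 0 w) =
    pm (-2 * u.imJ) (-2 * u.imK) (w * jk (-y) (-z)) := by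
  obtain ⟨hk, hp⟩ := proj_zero hdec
  rw [nablaR, D_self hdec, jacobi_eq hdec hw, D_left hdec hw, D_left hdec hw, jacobi_eq hdec hw]
  rw [show Rmap πk πp (pm y z (w * u)) 0 (pm 0 0 w) = 0 by
      simp [Rmap, Dmap, mq_lie_zero, mq_zero_lie, hk, hp],
    show Rmap πk πp (pm y z (w * u)) (pm 0 0 w) 0 = 0 by
      simp [Rmap, Dmap, mq_lie_zero, hp],
    sub_zero, sub_zero,
    pm_sub, ← mul_sub]
  congr 1
  · simp; ring
  · simp; ring
  · congr 1
    ext <;> simp <;> ring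

/-! ### Vectors contained in an invariant subspace -/

open Classical in
/-- An invariant 3-dimensional subspace containing the unit horizontal vector `w` contains, for some
nonzero `f ∈ ℝj ⊕ ℝk`, both the vertical vector `f` and the horizontal vector `w f`. -/
lemma exists_pair {πk πp : Mq → Mq}
    (hdec : ∀ Z ∈ gAlg, πk Z ∈ kAlg ∧ πp Z ∈ pAlg ∧ πk Z + πp Z = Z)
    {w : Quaternion ℝ} (hw : star w * w = 1) (hw' : w * star w = 1)
    (v : Submodule ℝ Mq) (hdim : Module.finrank ℝ v = 3) (hvp : v ≤ pAlg)
    (hR : ∀ X ∈ v, ∀ Y ∈ v, ∀ Z ∈ v, Rmap πk πp X Y Z ∈ v)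
    (hnR : ∀ V ∈ v, ∀ X ∈ v, ∀ Y ∈ v, ∀ Z ∈ v, nablaR πk πp V X Y Z ∈ v)
    (hX : pm 0 0 w ∈ v) :
    ∃ y z : ℝ, y ^ 2 + z ^ 2 ≠ 0 ∧ pm y z 0 ∈ v ∧ pm 0 0 (w * jk y z) ∈ v := by
  have hC : ∀ y z u, pm y z (w * u) ∈ v →
      pm (-2 * u.imJ) (-2 * u.imK) (w * jk (-y) (-z)) ∈ v := fun y z u h => by
    rw [← cartan_eq hdec hw]; exact hnR _ hX _ h _ hX _ hX
  have hJ : ∀ y z u, pm y z (w * u) ∈ v → pm (y / 2) (z / 2)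
      (w * quat 0 (4 * u.imI) (5 / 2 * u.imJ) (5 / 2 * u.imK)) ∈ v := fun y z u h => by
    rw [← jacobi_eq hdec hw]; exact hR _ h _ hX _ hX
  have hY : ∃ y z u, pm y z (w * u) ∈ v ∧ (y ^ 2 + z ^ 2 ≠ 0 ∨ u.imJ ^ 2 + u.imK ^ 2 ≠ 0) := by
    by_contra! hcon
    have hle : v ≤ Submodule.span ℝ (({pm 0 0 w, pm 0 0 (w * qi)} : Finset Mq) : Set Mq) := by
      intro Z hZ
      obtain ⟨y, z, t, rfl⟩ := exists_pm (hvp hZ)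
      have ht : t = w * (star w * t) := by rw [← mul_assoc, hw', one_mul]
      rw [ht] at hZ ⊢
      generalize star w * t = u at hZ ⊢
      obtain ⟨h1, h2⟩ := hcon _ _ _ hZ
      have hy : y = 0 := by nlinarith [sq_nonneg y, sq_nonneg z]
      have hz : z = 0 := by nlinarith [sq_nonneg y, sq_nonneg z]
      have hj : u.imJ = 0 := by nlinarith [sq_nonneg u.imJ, sq_nonneg u.imK]
      have hk : u.imK = 0 := by nlinarith [sq_nonneg u.imJ, sq_nonneg u.imK]
      have hu : w * u = u.re • w + u.imI • (w * qi) := by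
        rw [← mul_smul_comm]
        nth_rw 2 [← mul_one w]
        rw [← mul_smul_comm, ← mul_add]
        congr 1
        ext <;> simp [qi_eq, hj, hk]
      have : pm y z (w * u) = u.re • pm 0 0 w + u.imI • pm 0 0 (w * qi) := by
        rw [pm_smul, pm_smul, pm_add, hu, hy, hz]; simp
      rw [this]
      exact add_mem (Submodule.smul_mem _ _ (Submodule.subset_span (by simp)))
        (Submodule.smul_mem _ _ (Submodule.subset_span (by simp)))
    have h2 := (Submodule.finrank_mono hle).trans (finrank_span_finset_le_card _)
    have h3 := Finset.card_le_two (a := pm 0 0 w) (b := pm 0 0 (w * qi))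
    omega
  obtain ⟨y, z, u, hY, hne⟩ := hY
  -- `A` is twice the part of `Y` in the vertical plane plus `span {w j, w k}`; the two summands are
  -- then separated by the Jacobi operator.
  have hA := hC _ _ _ (hC _ _ _ hY)
  have hB := hJ _ _ _ hA
  have hP : pm (4 * y) (4 * z) (w * 0) ∈ v := by
    convert sub_mem (Submodule.smul_mem v (5 / 2 : ℝ) hA) hB using 1
    rw [pm_smul, pm_sub, ← mul_smul_comm, ← mul_sub]
    congr 1
    · simp; ring
    · simp; ring
    · congr 1
      ext <;> simp
  have hQ : pm 0 0 (w * jk (4 * u.imJ) (4 * u.imK)) ∈ v := by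
    convert sub_mem hB (Submodule.smul_mem v (1 / 2 : ℝ) hA) using 1
    rw [pm_smul, pm_sub, ← mul_smul_comm, ← mul_sub]
    congr 1
    · simp
    · simp
    · congr 1
      ext <;> simp <;> ring
  rcases hne with h | h
  · refine ⟨-(4 * y), -(4 * z), ?_, ?_, ?_⟩
    · contrapose! h; linarith
    · simpa [pm_neg] using neg_mem hP
    · simpa using hC _ _ _ hP
  · refine ⟨-2 * (4 * u.imJ), -2 * (4 * u.imK), ?_, ?_, ?_⟩
    · contrapose! h; linarith
    · simpa using hC _ _ _ hQ
    · convert Submodule.smul_mem v (-2 : ℝ) hQ using 1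
      rw [pm_smul, ← mul_smul_comm]
      congr 1
      · simp
      · simp
      · congr 1
        ext <;> simp

/-- Every 3-dimensional subspace of `𝔭` meets the 4-dimensional horizontal space. -/
lemma exists_horizontal (v : Submodule ℝ Mq) (hdim : Module.finrank ℝ v = 3) (hvp : v ≤ pAlg) :
    ∃ w : Quaternion ℝ, ‖w‖ = 1 ∧ pm 0 0 w ∈ v := by
  let f : Mq →ₗ[ℝ] ℝ × ℝ :=
    { toFun := fun X => ((X 0 0).imJ, (X 0 0).imK)
      map_add' := fun X Y => by simp
      map_smul' := fun c X => by simp [Matrix.smul_apply] }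
  have hker : LinearMap.ker (f.comp v.subtype) ≠ ⊥ := by
    apply LinearMap.ker_ne_bot_of_finrank_lt
    simp [hdim]
  obtain ⟨X, hX, hX0⟩ := Submodule.exists_mem_ne_zero_of_ne_bot hker
  obtain ⟨X, hXv⟩ := X
  obtain ⟨y, z, w, rfl⟩ := exists_pm (hvp hXv)
  have hX' : y = 0 ∧ z = 0 := by
    have h : ((pm y z w 0 0).imJ, (pm y z w 0 0).imK) = (0 : ℝ × ℝ) := hX
    simpa [pm] using h
  obtain ⟨rfl, rfl⟩ := hX'
  have hw : w ≠ 0 := by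
    rintro rfl
    exact hX0 (by ext1; exact pm_zero)
  refine ⟨‖w‖⁻¹ • w, norm_smul_inv_norm hw, ?_⟩
  simpa [pm_smul] using v.smul_mem ‖w‖⁻¹ hXv

/-! ### Conjugation to normal form -/

/-- A rotation by `(c + s i)²` takes the nonzero complex number `y + z i` to a nonzero real. -/
lemma exists_rotation {y z : ℝ} (h : y ^ 2 + z ^ 2 ≠ 0) : ∃ c s r : ℝ, r ≠ 0 ∧ c ^ 2 + s ^ 2 = 1 ∧
    (c ^ 2 - s ^ 2) * y - 2 * c * s * z = r ∧ (c ^ 2 - s ^ 2) * z + 2 * c * s * y = 0 := by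
  set r := √(y ^ 2 + z ^ 2)
  have hr2 : r ^ 2 = y ^ 2 + z ^ 2 := Real.sq_sqrt (by positivity)
  have hr : r ≠ 0 := fun h0 => h (by rw [← hr2, h0]; simp)
  obtain ⟨l, hl⟩ := IsAlgClosed.exists_pow_nat_eq (⟨y / r, -z / r⟩ : ℂ) (n := 2) two_pos
  have h1 : l.re ^ 2 - l.im ^ 2 = y / r := by
    have := congrArg Complex.re hl
    simp [sq] at this; linarith
  have h2 : 2 * l.re * l.im = -z / r := by
    have := congrArg Complex.im hl
    simp [sq] at this; linarith
  refine ⟨l.re, l.im, r, hr, ?_, ?_, ?_⟩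
  · have h3 : (l.re ^ 2 + l.im ^ 2) ^ 2 = 1 := by
      have : (l.re ^ 2 + l.im ^ 2) ^ 2 = (y / r) ^ 2 + (-z / r) ^ 2 := by
        rw [← h1, ← h2]; ring
      rw [this]; field_simp; linarith
    nlinarith [sq_nonneg l.re, sq_nonneg l.im]
  · rw [h1, h2]; field_simp; linarith
  · rw [h1, h2]; field_simp; ring

lemma inv_eq_star {a : Quaternion ℝ} (h : ‖a‖ = 1) : a⁻¹ = star a := by
  apply inv_eq_of_mul_eq_one_right
  rw [Quaternion.self_mul_star, Quaternion.normSq_eq_norm_mul_self, h]; simp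

/-- Conjugation by `diag(l, l w⁻¹)`, where `l = c + s i` has norm one: the vertical part is multiplied
by `l²`, and the horizontal part `w u` becomes `l u l⁻¹`. -/
lemma conjBy_pm {w : Quaternion ℝ} (hw1 : ‖w‖ = 1) (hw : star w * w = 1) {c s : ℝ}
    (hl : ‖quat c s 0 0‖ = 1) (y z : ℝ) (u : Quaternion ℝ) :
    conjBy (quat c s 0 0) (quat c s 0 0 * star w) (pm y z (w * u)) =
      pm ((c ^ 2 - s ^ 2) * y - 2 * c * s * z) ((c ^ 2 - s ^ 2) * z + 2 * c * s * y)
        (quat c s 0 0 * u * star (quat c s 0 0)) := by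
  have hq : ‖quat c s 0 0 * star w‖ = 1 := by rw [norm_mul, norm_star, hl, hw1, one_mul]
  have h2 : ∀ t, star w * (w * t) = t := fun t => by rw [← mul_assoc, hw, one_mul]
  rw [conjBy, inv_eq_star hl, inv_eq_star hq]
  apply mq_ext
  · simp [pm]
    ext <;> simp <;> ring
  · simp [pm, mul_assoc, h2]
  · simp [pm, mul_assoc, h2]
  · simp [pm]

/-- Every 3-dimensional subspace of `𝔭` invariant under `R`
and `∇R` is conjugate under the isotropy group `K = U(1)×Sp(1)` to
`span{e₁, e₃, e₅}` (the tangent space of the Lagrangian Berger projective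
space `ℝP³` in nearly Kähler `ℂP³`). -/
theorem three_dimensional_invariant_subspace_CP3
    (πk πp : Mq → Mq)
    (hdec : ∀ Z ∈ gAlg, πk Z ∈ kAlg ∧ πp Z ∈ pAlg ∧ πk Z + πp Z = Z)
    (v : Submodule ℝ Mq) (hdim : Module.finrank ℝ v = 3) (hvp : v ≤ pAlg)
    (hR : ∀ X ∈ v, ∀ Y ∈ v, ∀ Z ∈ v, Rmap πk πp X Y Z ∈ v)
    (hnR : ∀ V ∈ v, ∀ X ∈ v, ∀ Y ∈ v, ∀ Z ∈ v, nablaR πk πp V X Y Z ∈ v) :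
    ∃ lam q : Quaternion ℝ, lam.imJ = 0 ∧ lam.imK = 0 ∧ ‖lam‖ = 1 ∧ ‖q‖ = 1 ∧
      Submodule.map (conjBy lam q) v = Submodule.span ℝ {e1, e3, e5} := by
  obtain ⟨w, hw1, hX⟩ := exists_horizontal v hdim hvp
  have hw : star w * w = 1 := by
    rw [Quaternion.star_mul_self, Quaternion.normSq_eq_norm_mul_self, hw1]; simp
  have hw' : w * star w = 1 := by
    rw [Quaternion.self_mul_star, Quaternion.normSq_eq_norm_mul_self, hw1]; simp
  obtain ⟨y, z, hyz, hf, hwf⟩ := exists_pair hdec hw hw' v hdim hvp hR hnR hX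
  obtain ⟨c, s, r, hr, hcs, h1, h2⟩ := exists_rotation hyz
  have hl : ‖quat c s 0 0‖ = 1 := by
    have : ‖quat c s 0 0‖ * ‖quat c s 0 0‖ = 1 := by
      rw [← Quaternion.normSq_eq_norm_mul_self, Quaternion.normSq_def']
      simpa using hcs
    nlinarith [norm_nonneg (quat c s 0 0)]
  refine ⟨quat c s 0 0, quat c s 0 0 * star w, rfl, rfl, hl, ?_, ?_⟩
  · rw [norm_mul, norm_star, hl, hw1, one_mul]
  have hls : quat c s 0 0 * star (quat c s 0 0) = 1 := by
    rw [Quaternion.self_mul_star, Quaternion.normSq_eq_norm_mul_self, hl]; simp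
  have h0 : (√2 : ℝ) ≠ 0 := by positivity
  have i3 : conjBy (quat c s 0 0) (quat c s 0 0 * star w) (pm 0 0 w) = (2 : ℝ) • e3 := by
    have := conjBy_pm hw1 hw hl 0 0 1
    rw [mul_one, mul_one, hls] at this
    rw [this, pm_decomp]; simp
  have i1 : conjBy (quat c s 0 0) (quat c s 0 0 * star w) (pm y z 0) = (√2 * r) • e1 := by
    have := conjBy_pm hw1 hw hl y z 0
    rw [mul_zero, mul_zero, zero_mul, h1, h2] at this
    rw [this, pm_decomp]; simp
  have i5 : conjBy (quat c s 0 0) (quat c s 0 0 * star w) (pm 0 0 (w * jk y z))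
      = (2 * r) • e5 := by
    have := conjBy_pm hw1 hw hl 0 0 (jk y z)
    have e : quat c s 0 0 * jk y z * star (quat c s 0 0) = jk r 0 := by
      ext
      · simp
      · simp
      · rw [jk_imJ, ← h1]; simp; ring
      · rw [jk_imK]; simp; linarith
    rw [e] at this
    rw [this, pm_decomp]; simp
  symm
  apply Submodule.eq_of_le_of_finrank_le
  · rw [Submodule.span_le]
    have key : ∀ {a : ℝ} {x e : Mq}, a ≠ 0 → x ∈ v →
        conjBy (quat c s 0 0) (quat c s 0 0 * star w) x = a • e →
        e ∈ Submodule.map (conjBy (quat c s 0 0) (quat c s 0 0 * star w)) v := by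
      intro a x e ha hx h
      refine ⟨a⁻¹ • x, v.smul_mem _ hx, ?_⟩
      rw [map_smul, h, smul_smul, inv_mul_cancel₀ ha, one_smul]
    rintro x (rfl | rfl | rfl)
    · exact key (mul_ne_zero h0 hr) hf i1
    · exact key two_ne_zero hX i3
    · exact key (mul_ne_zero two_ne_zero hr) hwf i5
  · have hli : LinearIndependent ℝ ![e1, e3, e5] := by
      rw [Fintype.linearIndependent_iff]
      intro g hg
      have hg' : pm ((√2)⁻¹ * g 0) 0 (quat (g 1 / 2) 0 (g 2 / 2) 0) = 0 := by
        rw [← hg, Fin.sum_univ_three, pm_decomp]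
        simp [h0, mul_div_cancel₀]
      have a0 := congrArg QuaternionAlgebra.imJ (congrFun (congrFun hg' 0) 0)
      have a1 := congrArg QuaternionAlgebra.re (congrFun (congrFun hg' 1) 0)
      have a2 := congrArg QuaternionAlgebra.imJ (congrFun (congrFun hg' 1) 0)
      simp [pm] at a0 a1 a2
      intro i
      fin_cases i <;> simp [a0, a1, a2]
    have := finrank_span_eq_card hli
    have hrange : Set.range ![e1, e3, e5] = {e1, e3, e5} := by
      ext x; simp; tauto
    rw [hrange] at this
    rw [this, Fintype.card_fin]
    exact (Submodule.finrank_map_le _ _).trans hdim.le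

end
end

section
/- The real span 𝔰 = span_ℝ{ i(E₁₁ + 3E₂₂), √3(E₂₁ − E₁₂) + 2jE₁₁, −2kE₁₁ − √3·i(E₁₂ + E₂₁) } is a 3-dimensional Lie subalgebra of 𝔰𝔭(2) which is canonically embedded with respect to the decomposition 𝔤 = 𝔨 ⊕ 𝔭, i.e. 𝔰 = (𝔰 ∩ 𝔨) ⊕ (𝔰 ∩ 𝔭), with 𝔰 ∩ 𝔨 = ℝ·i(E₁₁ + 3E₂₂) and 𝔰 ∩ 𝔭 = span{√2·e₁ + √3·e₃, √2·e₂ + √3·e₄}. (This subalgebra 𝔰𝔲(2)_{Λ₃} gives rise to the totally geodesic J-holomorphic sphere S²(√5) in nearly Kähler ℂP³.) -/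
/-!
Write `H = vH`, `E = vE`, `F = vF`. Then `H ∈ 𝔨`, while `E = 2(√2 e₁ + √3 e₃)` and
`F = -2(√2 e₂ + √3 e₄)` lie in `𝔭`, so `𝔰` is spanned by vectors each of which lies in `𝔨` or in `𝔭`.
It is closed under the bracket because `[H, E] = -2F`, `[H, F] = 2E` and `[E, F] = -2H`.

The two intersections are read off from matrix entries of `aH + bE + cF`: the `(0,0)` entry is
`a i + 2b j - 2c k`. On `𝔨` the `j`- and `k`-components of the `(0,0)` entry vanish
(`kAlg_entry`), forcing `b = c = 0`; on `𝔭` its `i`-component vanishes (`pAlg_entry`), forcing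
`a = 0`. The same three components show that `H, E, F` are linearly independent.
-/

/- Setup: the homogeneous nearly Kähler ℂP³ = Sp(2)/(U(1)×Sp(1));
𝔤 = 𝔰𝔭(2) = 𝔨 ⊕ 𝔭 as in the paper. -/

noncomputable section
open Matrix

/-- `i(E₁₁ + 3E₂₂)`. -/
def vH : Mq := !![qi, 0; 0, (3 : ℝ) • qi]

/-- `√3(E₂₁ − E₁₂) + 2jE₁₁`. -/
def vE : Mq := Real.sqrt 3 • !![0, -1; 1, 0] + (2 : ℝ) • !![qj, 0; 0, 0]

/-- `−2kE₁₁ − √3·i(E₁₂ + E₂₁)`. -/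
def vF : Mq := -((2 : ℝ) • !![qk, 0; 0, 0]) - Real.sqrt 3 • !![0, qi; qi, 0]

/-- `𝔰𝔲(2)_{Λ₃} = span{vH, vE, vF}`. -/
def sLam : Submodule ℝ Mq := Submodule.span ℝ {vH, vE, vF}

/-! ### Components of the quaternion units

Unfolding `qi`, `qj`, `qk` exposes constructor terms of type `QuaternionAlgebra`, on which the
`Quaternion` component lemmas no longer fire; these projections keep the units folded. -/

@[simp] lemma qi_re : qi.re = 0 := rfl
@[simp] lemma qi_imI : qi.imI = 1 := rfl
@[simp] lemma qi_imJ : qi.imJ = 0 := rfl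
@[simp] lemma qi_imK : qi.imK = 0 := rfl
@[simp] lemma qj_re : qj.re = 0 := rfl
@[simp] lemma qj_imI : qj.imI = 0 := rfl
@[simp] lemma qj_imJ : qj.imJ = 1 := rfl
@[simp] lemma qj_imK : qj.imK = 0 := rfl
@[simp] lemma qk_re : qk.re = 0 := rfl
@[simp] lemma qk_imI : qk.imI = 0 := rfl
@[simp] lemma qk_imJ : qk.imJ = 0 := rfl
@[simp] lemma qk_imK : qk.imK = 1 := rfl

/-! ### Structure constants -/

section
  -- The `simp` lemmas for the components of `0` and `1` are scoped.
open scoped Quaternion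

lemma lie_vH_vE : ⁅vH, vE⁆ = (-2 : ℝ) • vF := by
  rw [Ring.lie_def]
  ext1 i j
  fin_cases i <;> fin_cases j <;> apply Quaternion.ext <;>
    simp [vH, vE, vF] <;> ring

lemma lie_vH_vF : ⁅vH, vF⁆ = (2 : ℝ) • vE := by
  rw [Ring.lie_def]
  ext1 i j
  fin_cases i <;> fin_cases j <;> apply Quaternion.ext <;>
    simp [vH, vE, vF] <;> ring

lemma lie_vE_vF : ⁅vE, vF⁆ = (-2 : ℝ) • vH := by
  rw [Ring.lie_def]
  ext1 i j
  fin_cases i <;> fin_cases j <;> apply Quaternion.ext <;>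
    simp [vH, vE, vF] <;> norm_num

end

/-! ### Membership and matrix entries -/

lemma vE_eq : vE = (2 : ℝ) • (Real.sqrt 2 • e1 + Real.sqrt 3 • e3) := by
  have h2 : Real.sqrt 2 ≠ 0 := by positivity
  simp only [e1, e3, smul_smul, mul_inv_cancel₀ h2, smul_add, vE]
  module

lemma vF_eq : vF = (-2 : ℝ) • (Real.sqrt 2 • e2 + Real.sqrt 3 • e4) := by
  have h2 : Real.sqrt 2 ≠ 0 := by positivity
  simp only [e2, e4, smul_smul, mul_inv_cancel₀ h2, smul_add, vF]
  module

lemma mem_sLam {X : Mq} : X ∈ sLam ↔ ∃ a b c : ℝ, a • vH + b • vE + c • vF = X :=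
  Submodule.mem_span_triple

lemma entry_imI (a b c : ℝ) : ((a • vH + b • vE + c • vF) 0 0).imI = a := by
  simp [vH, vE, vF]

lemma entry_imJ (a b c : ℝ) : ((a • vH + b • vE + c • vF) 0 0).imJ = b * 2 := by
  simp [vH, vE, vF]

lemma entry_imK (a b c : ℝ) : ((a • vH + b • vE + c • vF) 0 0).imK = -(c * 2) := by
  simp [vH, vE, vF]

section
  -- The `simp` lemmas for the components of `0` and `1` are scoped.
open scoped Quaternion

lemma kAlg_entry {X : Mq} (hX : X ∈ kAlg) : (X 0 0).imJ = 0 ∧ (X 0 0).imK = 0 := by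
  induction hX using Submodule.span_induction with
  | mem x hx => rcases hx with rfl | rfl | rfl | rfl <;> simp
  | zero => simp
  | add x y _ _ hx hy => simp [hx, hy]
  | smul r x _ hx => simp [hx]

lemma pAlg_entry {X : Mq} (hX : X ∈ pAlg) : (X 0 0).imI = 0 := by
  induction hX using Submodule.span_induction with
  | mem x hx =>
    rcases hx with rfl | rfl | rfl | rfl | rfl | rfl <;> simp [e1, e2, e3, e4, e5, e6]
  | zero => simp
  | add x y _ _ hx hy => simp [hx, hy]
  | smul r x _ hx => simp [hx]

end

/-! ### The subalgebra -/

lemma vH_mem_sLam : vH ∈ sLam := Submodule.subset_span (by simp)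
lemma vE_mem_sLam : vE ∈ sLam := Submodule.subset_span (by simp)
lemma vF_mem_sLam : vF ∈ sLam := Submodule.subset_span (by simp)

lemma vH_mem_kAlg : vH ∈ kAlg := by
  have h : vH = !![qi, 0; 0, 0] + (3 : ℝ) • !![0, 0; 0, qi] := by
    ext i j <;> fin_cases i <;> fin_cases j <;> simp [vH]
  rw [h]
  exact add_mem (Submodule.subset_span (by simp))
    (Submodule.smul_mem _ _ (Submodule.subset_span (by simp)))

lemma vE_mem_pAlg : vE ∈ pAlg := by
  rw [vE_eq]
  exact Submodule.smul_mem _ _ (add_mem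
    (Submodule.smul_mem _ _ (Submodule.subset_span (by simp)))
    (Submodule.smul_mem _ _ (Submodule.subset_span (by simp))))

lemma vF_mem_pAlg : vF ∈ pAlg := by
  rw [vF_eq]
  exact Submodule.smul_mem _ _ (add_mem
    (Submodule.smul_mem _ _ (Submodule.subset_span (by simp)))
    (Submodule.smul_mem _ _ (Submodule.subset_span (by simp))))

lemma finrank_sLam : Module.finrank ℝ sLam = 3 := by
  have hli : LinearIndependent ℝ ![vH, vE, vF] := by
    rw [Fintype.linearIndependent_iff]
    intro g hg
    simp only [Fin.sum_univ_three, Matrix.cons_val_zero, Matrix.cons_val_one,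
      Matrix.cons_val] at hg
    have hI := entry_imI (g 0) (g 1) (g 2)
    have hJ := entry_imJ (g 0) (g 1) (g 2)
    have hK := entry_imK (g 0) (g 1) (g 2)
    rw [hg] at hI hJ hK
    simp only [Matrix.zero_apply, Quaternion.imI_zero, Quaternion.imJ_zero,
      Quaternion.imK_zero] at hI hJ hK
    intro i
    fin_cases i
    · exact hI.symm
    · change g 1 = 0
      linarith
    · change g 2 = 0
      linarith
  have h := finrank_span_eq_card hli
  have hr : Set.range ![vH, vE, vF] = {vH, vE, vF} := by
    simp only [Matrix.range_cons, Matrix.range_empty, Set.union_empty, Set.insert_eq]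
  rw [hr] at h
  rw [Fintype.card_fin] at h
  exact h

lemma sLam_le_sup : sLam ≤ (sLam ⊓ kAlg) ⊔ (sLam ⊓ pAlg) := by
  refine Submodule.span_le.2 ?_
  rintro x (rfl | rfl | rfl)
  · exact Submodule.mem_sup_left ⟨vH_mem_sLam, vH_mem_kAlg⟩
  · exact Submodule.mem_sup_right ⟨vE_mem_sLam, vE_mem_pAlg⟩
  · exact Submodule.mem_sup_right ⟨vF_mem_sLam, vF_mem_pAlg⟩

lemma lie_mem_sLam {X Y : Mq} (hX : X ∈ sLam) (hY : Y ∈ sLam) : ⁅X, Y⁆ ∈ sLam := by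
  obtain ⟨a, b, c, rfl⟩ := mem_sLam.1 hX
  obtain ⟨a', b', c', rfl⟩ := mem_sLam.1 hY
  have hHE := lie_vH_vE
  have hHF := lie_vH_vF
  have hEF := lie_vE_vF
  rw [Ring.lie_def] at hHE hHF hEF ⊢
  refine mem_sLam.2 ⟨-2 * (b * c' - c * b'), 2 * (a * c' - c * a'), -2 * (a * b' - b * a'), ?_⟩
  simp only [add_mul, mul_add, smul_mul_assoc, mul_smul_comm]
  -- Bilinearity: the bracket is a combination of the three structure equations whose
  -- coefficients are the 2×2 minors of the coordinates.
  linear_combination (norm := module) (-(a * b' - b * a')) • hHE - (a * c' - c * a') • hHF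
    - (b * c' - c * b') • hEF

lemma sLam_inf_kAlg : sLam ⊓ kAlg = Submodule.span ℝ {vH} := by
  apply le_antisymm
  · rintro X ⟨hs, hk⟩
    obtain ⟨a, b, c, rfl⟩ := mem_sLam.1 hs
    obtain ⟨hJ, hK⟩ := kAlg_entry hk
    rw [entry_imJ] at hJ
    rw [entry_imK] at hK
    obtain rfl : b = 0 := by linarith
    obtain rfl : c = 0 := by linarith
    exact Submodule.mem_span_singleton.2 ⟨a, by module⟩
  · rw [Submodule.span_singleton_le_iff_mem]
    exact ⟨vH_mem_sLam, vH_mem_kAlg⟩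

lemma sLam_inf_pAlg : sLam ⊓ pAlg = Submodule.span ℝ
    {Real.sqrt 2 • e1 + Real.sqrt 3 • e3, Real.sqrt 2 • e2 + Real.sqrt 3 • e4} := by
  apply le_antisymm
  · rintro X ⟨hs, hp⟩
    obtain ⟨a, b, c, rfl⟩ := mem_sLam.1 hs
    have hI := pAlg_entry hp
    rw [entry_imI] at hI
    subst hI
    refine Submodule.mem_span_pair.2 ⟨2 * b, -2 * c, ?_⟩
    rw [vE_eq, vF_eq]
    module
  · have hE : Real.sqrt 2 • e1 + Real.sqrt 3 • e3 = (2⁻¹ : ℝ) • vE := by rw [vE_eq]; module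
    have hF : Real.sqrt 2 • e2 + Real.sqrt 3 • e4 = (-2⁻¹ : ℝ) • vF := by rw [vF_eq]; module
    rw [hE, hF, Submodule.span_le]
    rintro x (rfl | rfl)
    · exact Submodule.smul_mem _ _ ⟨vE_mem_sLam, vE_mem_pAlg⟩
    · exact Submodule.smul_mem _ _ ⟨vF_mem_sLam, vF_mem_pAlg⟩

/-- `𝔰 = span{i(E₁₁+3E₂₂), √3(E₂₁−E₁₂)+2jE₁₁,
−2kE₁₁−√3·i(E₁₂+E₂₁)}` is a 3-dimensional Lie subalgebra of `𝔰𝔭(2)` which is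
canonically embedded, with `𝔰 ∩ 𝔨 = ℝ·i(E₁₁+3E₂₂)` and
`𝔰 ∩ 𝔭 = span{√2e₁+√3e₃, √2e₂+√3e₄}`. It gives rise to the totally geodesic
`J`-holomorphic sphere `S²(√5)` in nearly Kähler `ℂP³`. -/
theorem su2Lambda3_canonically_embedded :
    Module.finrank ℝ sLam = 3 ∧
    sLam ≤ gAlg ∧
    (∀ X ∈ sLam, ∀ Y ∈ sLam, ⁅X, Y⁆ ∈ sLam) ∧
    sLam = (sLam ⊓ kAlg) ⊔ (sLam ⊓ pAlg) ∧
    sLam ⊓ kAlg = Submodule.span ℝ {vH} ∧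
    sLam ⊓ pAlg = Submodule.span ℝ
      {Real.sqrt 2 • e1 + Real.sqrt 3 • e3, Real.sqrt 2 • e2 + Real.sqrt 3 • e4} := by
  exact ⟨finrank_sLam, sLam_le_sup.trans (sup_le_sup inf_le_right inf_le_right),
    fun _ hX _ hY => lie_mem_sLam hX hY,
    le_antisymm sLam_le_sup (sup_le inf_le_left inf_le_left), sLam_inf_kAlg, sLam_inf_pAlg⟩

end
end
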